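/- arXiv:1002.1383 — 13 statements merged into one kernel-verified Lean document; each statement's English description precedes it below -/
import Mathlib

section
/- For all natural numbers n and k with n ≥ k, the least common multiple lcm(1, 2, …, k) divides the least common multiple lcm(n, n−1, …, n−k+1) of the k consecutive integers ending at n; equivalently, the lcm-binomial number [n, k] := lcm(n, n−1, …, n−k+1) / lcm(1, 2, …, k) is a positive integer. -/
/-- `rangeLcm a b` is `lcm(a, a+1, …, b)`, with the convention that the
lcm of an empty range equals `1`. -/
def rangeLcm (a b : ℕ) : ℕ := (Finset.Icc a b).lcm id

/-- The lcm-binomial number `[n, k] = lcm(n, n-1, …, n-k+1) / lcm(1, 2, …, k)`. -/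
def lcmBinom (n k : ℕ) : ℕ := rangeLcm (n - k + 1) n / rangeLcm 1 k

/-- For all natural numbers `n ≥ k`, `lcm(1, …, k)` divides
`lcm(n, n-1, …, n-k+1)`; equivalently, `[n, k]` is a positive integer. -/
theorem rangeLcm_one_dvd_rangeLcm_top (n k : ℕ) (h : k ≤ n) :
    rangeLcm 1 k ∣ rangeLcm (n - k + 1) n ∧ 0 < lcmBinom n k := by
  have hd : rangeLcm 1 k ∣ rangeLcm (n - k + 1) n := by
    unfold rangeLcm
    apply Finset.lcm_dvd
    intro m hm
    rw [Finset.mem_Icc] at hm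
    have h1 := Nat.div_add_mod n m
    have h2 := Nat.mod_lt n (show 0 < m by omega)
    have h3 : m * (n / m) ∈ Finset.Icc (n - k + 1) n := by
      rw [Finset.mem_Icc]
      omega
    exact (Dvd.intro _ rfl : m ∣ m * (n / m)).trans (Finset.dvd_lcm (f := id) h3)
  refine ⟨hd, ?_⟩
  have hne : rangeLcm (n - k + 1) n ≠ 0 := by
    unfold rangeLcm
    rw [Ne, Finset.lcm_eq_zero_iff]
    simp
  unfold lcmBinom
  exact Nat.div_pos (Nat.le_of_dvd (Nat.pos_of_ne_zero hne) hd)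
    (Nat.pos_of_dvd_of_pos hd (Nat.pos_of_ne_zero hne))
end

section
/- For all natural numbers n and k with n ≥ k, the lcm-binomial number [n, k] divides the binomial coefficient C(n, k) = n! / (k! (n−k)!). -/
/-- For all natural numbers `n ≥ k`, the lcm-binomial number `[n, k]`
divides the binomial coefficient `C(n, k)`. -/
theorem lcmBinom_dvd_choose (n k : ℕ) (h : k ≤ n) :
    lcmBinom n k ∣ n.choose k := by
  have hne1 : rangeLcm 1 k ≠ 0 := by
    unfold rangeLcm
    rw [Ne, Finset.lcm_eq_zero_iff]
    simp
  have hne2 : rangeLcm (n - k + 1) n ≠ 0 := by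
    unfold rangeLcm
    rw [Ne, Finset.lcm_eq_zero_iff]
    simp
  have hdvd : rangeLcm 1 k ∣ rangeLcm (n - k + 1) n := by
    unfold rangeLcm
    refine Finset.lcm_dvd fun j hj => ?_
    rw [Finset.mem_Icc] at hj
    refine (Dvd.intro (n / j) rfl : j ∣ j * (n / j)).trans
      (Finset.dvd_lcm (f := id) (b := j * (n / j)) ?_)
    rw [Finset.mem_Icc]
    have h1 := Nat.div_add_mod n j
    have h2 := Nat.mod_lt n (show j > 0 by omega)
    constructor <;> omega
  have hq0 : lcmBinom n k ≠ 0 := by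
    unfold lcmBinom
    exact (Nat.div_pos (Nat.le_of_dvd (Nat.pos_of_ne_zero hne2) hdvd)
      (Nat.pos_of_ne_zero hne1)).ne'
  rw [← Nat.factorization_prime_le_iff_dvd hq0 (Nat.choose_pos h).ne']
  intro p hp
  unfold lcmBinom
  rw [Nat.factorization_div hdvd, Finsupp.coe_tsub, Pi.sub_apply, tsub_le_iff_right]
  have hlog : Nat.log p k ≤ (rangeLcm 1 k).factorization p := by
    rw [← hp.pow_dvd_iff_le_factorization hne1]
    rcases Nat.eq_zero_or_pos k with rfl | hk
    · simp
    · unfold rangeLcm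
      refine Finset.dvd_lcm (f := id) (b := p ^ Nat.log p k) ?_
      rw [Finset.mem_Icc]
      exact ⟨Nat.pow_pos hp.pos, Nat.pow_log_le_self p hk.ne'⟩
  refine le_trans ?_ (Nat.add_le_add_left hlog _)
  have hsup : (rangeLcm (n - k + 1) n).factorization p
      = (Finset.Icc (n - k + 1) n).sup fun a => a.factorization p := by
    unfold rangeLcm
    exact Finset.factorization_lcm (fun a ha => by
      rw [Finset.mem_Icc] at ha
      simp only [id]
      omega) p
  rw [hsup]
  refine Finset.sup_le fun m hm => ?_
  rw [Finset.mem_Icc] at hm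
  have hm0 : m ≠ 0 := by omega
  rw [Nat.factorization_choose hp h (Nat.lt_succ_self (Nat.log p n)), ← tsub_le_iff_right]
  have hc : (Finset.Ico (Nat.log p k + 1) (m.factorization p + 1)).card
      = m.factorization p - Nat.log p k := by
    rw [Nat.card_Ico]; omega
  rw [← hc]
  refine Finset.card_le_card fun i hi => ?_
  rw [Finset.mem_Ico] at hi
  have hpd : p ^ i ∣ m := (hp.pow_dvd_iff_le_factorization hm0).2 (by omega)
  have hkp : k < p ^ i := Nat.lt_pow_of_log_lt hp.one_lt (by omega)
  have hin : i ≤ Nat.log p n :=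
    Nat.le_log_of_pow_le hp.one_lt ((Nat.le_of_dvd (by omega) hpd).trans hm.2)
  rw [Finset.mem_filter, Finset.mem_Ico]
  refine ⟨⟨by omega, by omega⟩, ?_⟩
  rw [Nat.mod_eq_of_lt hkp]
  by_contra hlt
  obtain ⟨c, rfl⟩ := hpd
  have h1 := Nat.div_add_mod (n - k) (p ^ i)
  generalize (n - k) / p ^ i = q at *
  generalize (n - k) % p ^ i = r at *
  have h2 : p ^ i * q < p ^ i * c := by omega
  have h3 : q + 1 ≤ c := Nat.lt_of_mul_lt_mul_left h2
  have h4 := Nat.mul_le_mul_left (p ^ i) h3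
  rw [Nat.mul_add, Nat.mul_one] at h4
  omega
end

section
/- For every natural number k ≥ 0 and every positive integer n, the integer g_k(1) divides the integer g_k(n), where g_k(n) := n(n+1)⋯(n+k) / lcm(n, n+1, …, n+k). Note that g_k(1) = (k+1)! / lcm(1, 2, …, k+1). -/
/-- Farhi's arithmetic function `g_k(n) = n(n+1)⋯(n+k) / lcm(n, n+1, …, n+k)`. -/
def farhiG (k n : ℕ) : ℕ := (∏ i ∈ Finset.Icc n (n + k), i) / rangeLcm n (n + k)

theorem aux_fact (p B x : ℕ) (hp : p.Prime) (hx : 0 < x) (hB : x ≤ B) :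
    x.factorization p = ∑ i ∈ Finset.Ico 1 B, if p ^ i ∣ x then 1 else 0 := by
  rw [Nat.factorization_eq_card_pow_dvd_of_lt hp hx
    (lt_of_le_of_lt hB (Nat.lt_pow_self hp.one_lt)), Finset.card_filter]

theorem aux_lcm (p i : ℕ) (hp : p.Prime) (hi : 1 ≤ i) (s : Finset ℕ)
    (h : p ^ i ∣ s.lcm id) : ∃ x ∈ s, p ^ i ∣ x := by
  induction s using Finset.induction_on with
  | empty =>
    simp at h
    exact absurd h (by
      rintro (h | h)
      · exact hp.one_lt.ne' h
      · omega)
  | insert a s ha ih =>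
    rw [Finset.lcm_insert] at h
    have h2 : p ^ i ∣ a ∨ p ^ i ∣ s.lcm id := by
      by_cases ha0 : a = 0
      · left; simp [ha0]
      by_cases hs0 : s.lcm id = 0
      · right; simp [hs0]
      have hl : Nat.lcm a (s.lcm id) ≠ 0 := Nat.lcm_ne_zero ha0 hs0
      change p ^ i ∣ Nat.lcm a (s.lcm id) at h
      rw [hp.pow_dvd_iff_le_factorization hl, Nat.factorization_lcm ha0 hs0] at h
      rw [hp.pow_dvd_iff_le_factorization ha0, hp.pow_dvd_iff_le_factorization hs0]
      simpa using h
    rcases h2 with h2 | h2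
    · exact ⟨a, Finset.mem_insert_self _ _, h2⟩
    · obtain ⟨x, hx, h3⟩ := ih h2
      exact ⟨x, Finset.mem_insert_of_mem hx, h3⟩

theorem aux_count (k n q : ℕ) (hn : 1 ≤ n) :
    ((Finset.Icc 1 (1 + k)).filter (fun x => q ∣ x)).card ≤
      ((Finset.Icc n (n + k)).filter (fun x => q ∣ x)).card := by
  have h1 := Nat.Ioc_filter_dvd_card_eq_div (1 + k) q
  have h2 := Nat.Ioc_filter_dvd_card_eq_div (n + k) q
  have h3 := Nat.Ioc_filter_dvd_card_eq_div (n - 1) q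
  have e1 : Finset.Icc 1 (1 + k) = Finset.Ioc 0 (1 + k) := by ext; simp; omega
  have e2 : Finset.Ioc 0 (n + k) = Finset.Ioc 0 (n - 1) ∪ Finset.Icc n (n + k) := by
    ext; simp; omega
  have h4 := Nat.add_div_le_add_div (n - 1) (1 + k) q
  rw [show n - 1 + (1 + k) = n + k by omega] at h4
  rw [e2, Finset.filter_union] at h2
  have h5 := Finset.card_union_le ((Finset.Ioc 0 (n - 1)).filter (fun x => q ∣ x))
    ((Finset.Icc n (n + k)).filter (fun x => q ∣ x))
  rw [e1]
  omega

theorem aux_prod (p B : ℕ) (hp : p.Prime) (s : Finset ℕ) (hs : ∀ x ∈ s, 0 < x ∧ x ≤ B) :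
    (∏ x ∈ s, x).factorization p =
      ∑ i ∈ Finset.Ico 1 B, (s.filter (fun x => p ^ i ∣ x)).card := by
  rw [Nat.factorization_prod (fun x hx => (hs x hx).1.ne')]
  rw [Finsupp.finset_sum_apply]
  rw [Finset.sum_congr rfl (fun x hx => aux_fact p B x hp (hs x hx).1 (hs x hx).2)]
  rw [Finset.sum_comm]
  simp only [Finset.card_filter]

/-- For every `k` and every positive integer `n`, `g_k(1)` divides `g_k(n)`. -/
theorem farhiG_one_dvd_farhiG (k n : ℕ) (hn : 1 ≤ n) :
    farhiG k 1 ∣ farhiG k n := by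
  have hd : ∀ m, rangeLcm m (m + k) ∣ ∏ i ∈ Finset.Icc m (m + k), i := fun m =>
    Finset.lcm_dvd fun x hx => Finset.dvd_prod_of_mem (fun i => i) hx
  have hP : ∀ m, 1 ≤ m → 0 < ∏ i ∈ Finset.Icc m (m + k), i := fun m hm =>
    Finset.prod_pos fun x hx => by rw [Finset.mem_Icc] at hx; omega
  have hL : ∀ m, 1 ≤ m → 0 < rangeLcm m (m + k) := fun m hm =>
    Nat.pos_of_dvd_of_pos (hd m) (hP m hm)
  have key : (∏ i ∈ Finset.Icc 1 (1 + k), i) * rangeLcm n (n + k) ∣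
      (∏ i ∈ Finset.Icc n (n + k), i) * rangeLcm 1 (1 + k) := by
    have p1 := hP 1 le_rfl
    have pn := hP n hn
    have l1 := hL 1 le_rfl
    have ln := hL n hn
    rw [← Nat.factorization_prime_le_iff_dvd (by positivity) (by positivity)]
    intro p hp
    rw [Nat.factorization_mul p1.ne' ln.ne', Nat.factorization_mul pn.ne' l1.ne']
    simp only [Finsupp.add_apply]
    obtain ⟨B, hB⟩ : ∃ B, B = rangeLcm n (n + k) + rangeLcm 1 (1 + k) + n + k + 1 := ⟨_, rfl⟩
    rw [aux_prod p B hp _ (fun x hx => by rw [Finset.mem_Icc] at hx; omega),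
      aux_prod p B hp _ (fun x hx => by rw [Finset.mem_Icc] at hx; omega),
      aux_fact p B _ hp ln (by omega), aux_fact p B _ hp l1 (by omega),
      ← Finset.sum_add_distrib, ← Finset.sum_add_distrib]
    apply Finset.sum_le_sum
    intro i hi
    have hi1 := (Finset.mem_Ico.1 hi).1
    have hc := aux_count k n (p ^ i) hn
    have hn' : p ^ i ∣ rangeLcm n (n + k) →
        0 < ((Finset.Icc n (n + k)).filter (fun x => p ^ i ∣ x)).card := fun h => by
      obtain ⟨x, hx, h2⟩ := aux_lcm p i hp hi1 _ h
      exact Finset.card_pos.2 ⟨x, Finset.mem_filter.2 ⟨hx, h2⟩⟩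
    have h1' : 0 < ((Finset.Icc 1 (1 + k)).filter (fun x => p ^ i ∣ x)).card →
        p ^ i ∣ rangeLcm 1 (1 + k) := fun h => by
      obtain ⟨x, hx⟩ := Finset.card_pos.1 h
      obtain ⟨hx, h2⟩ := Finset.mem_filter.1 hx
      exact h2.trans (Finset.dvd_lcm (f := id) hx)
    by_cases hz : 0 < ((Finset.Icc 1 (1 + k)).filter (fun x => p ^ i ∣ x)).card
    · rw [if_pos (h1' hz)]
      split_ifs <;> omega
    · split_ifs with a b b
      · have := hn' a; omega
      · have := hn' a; omega
      · omega
      · omega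
  unfold farhiG
  obtain ⟨a, ha⟩ := hd 1
  obtain ⟨b, hb⟩ := hd n
  rw [ha, hb] at key ⊢
  rw [Nat.mul_div_cancel_left _ (hL 1 le_rfl), Nat.mul_div_cancel_left _ (hL n hn)]
  refine Nat.dvd_of_mul_dvd_mul_left (Nat.mul_pos (hL 1 le_rfl) (hL n hn)) ?_
  convert key using 1 <;> ring
end

section
/- For every natural number k ≥ 1, the sequence n ↦ C(n, k) / [n, k] (defined for n ≥ k) of positive integers is periodic, and its smallest period is T_k = ∏_{p prime, p < k} p^{α_p}, where α_p = 0 if v_p(k) ≥ max_{1 ≤ i < k} v_p(i), and α_p = max_{1 ≤ i < k} v_p(i) otherwise (v_p denoting the p-adic valuation). -/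
namespace LB

def c (k q n : ℕ) : ℕ := (n + k) / q - n / q

lemma card_eq (k q n : ℕ) : ((Finset.Icc (n+1) (n+k)).filter (fun i => q ∣ i)).card = c k q n := by
  unfold c
  have : ((Finset.Icc (n+1) (n+k)).filter (fun i => q ∣ i)).card + n / q = (n + k) / q := by
    induction k with
    | zero => simp
    | succ k ih =>
      have h1 : Finset.Icc (n+1) (n+(k+1)) = insert (n+k+1) (Finset.Icc (n+1) (n+k)) := by
        ext x; simp only [Finset.mem_Icc, Finset.mem_insert]; omega
      rw [h1, Finset.filter_insert, ← add_assoc n k 1, Nat.succ_div, ← ih]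
      split_ifs with h
      · rw [Finset.card_insert_of_notMem (by simp)]; omega
      · omega
  omega

lemma c_zero_le (k q n : ℕ) : c k q 0 ≤ c k q n := by
  unfold c
  have := Nat.add_div_le_add_div n k q
  simp only [Nat.zero_div, zero_add]; omega

lemma c_per (k q n t : ℕ) (hq : 0 < q) (h : q ∣ t) : c k q (n + t) = c k q n := by
  unfold c
  obtain ⟨s, rfl⟩ := h
  rw [show n + q * s + k = n + k + q * s by ring, Nat.add_mul_div_left _ _ hq,
    Nat.add_mul_div_left _ _ hq]
  omega

lemma c_const (k q n : ℕ) (hq : 0 < q) (h : q ∣ k) : c k q n = k / q := by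
  unfold c
  obtain ⟨s, rfl⟩ := h
  rw [Nat.add_mul_div_left _ _ hq, Nat.mul_div_cancel_left _ hq]
  omega

lemma c_le_one (k q n : ℕ) (hq : 0 < q) (h : k ≤ q) : c k q n ≤ 1 := by
  unfold c
  have : (n + k) / q ≤ (n + q) / q := Nat.div_le_div_right (by omega)
  rw [Nat.add_div_right _ hq] at this
  omega

lemma one_le_c (k q n : ℕ) (hq : 0 < q) (h : q ≤ k) : 1 ≤ c k q n := by
  unfold c
  have : (n + q) / q ≤ (n + k) / q := Nat.div_le_div_right (by omega)
  rw [Nat.add_div_right _ hq] at this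
  omega

lemma c_succ (k q n : ℕ) : c k q (n+1) + (if q ∣ n + 1 then 1 else 0) =
    c k q n + (if q ∣ n + k + 1 then 1 else 0) := by
  unfold c
  rw [show n + 1 + k = n + k + 1 by ring, Nat.succ_div, Nat.succ_div]
  have : n / q ≤ (n+k)/q := Nat.div_le_div_right (by omega)
  have h2 : (n+1) / q ≤ (n+k+1)/q := Nat.div_le_div_right (by omega)
  rw [Nat.succ_div, Nat.succ_div] at h2
  omega

def P (k n : ℕ) : ℕ := ∏ i ∈ Finset.Icc (n+1) (n+k), i
def L (k n : ℕ) : ℕ := (Finset.Icc (n+1) (n+k)).lcm id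
def g (k n : ℕ) : ℕ := P k n / L k n

lemma P_pos (k n : ℕ) : 0 < P k n := by
  apply Finset.prod_pos; intro i hi; simp at hi; omega

lemma L_dvd_P (k n : ℕ) : L k n ∣ P k n :=
  Finset.lcm_dvd fun i hi => Finset.dvd_prod_of_mem (fun i => i) hi

lemma L_pos (k n : ℕ) : 0 < L k n := Nat.pos_of_dvd_of_pos (L_dvd_P k n) (P_pos k n)

lemma L_mul_g (k n : ℕ) : L k n * g k n = P k n := Nat.mul_div_cancel' (L_dvd_P k n)

lemma g_pos (k n : ℕ) : 0 < g k n := Nat.pos_of_mul_pos_left (by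
  rw [L_mul_g]; exact P_pos k n)

lemma pow_dvd_lcm (p e : ℕ) (hp : p.Prime) (he : 1 ≤ e) (S : Finset ℕ) (hS : ∀ i ∈ S, 0 < i) :
    p ^ e ∣ S.lcm id ↔ ∃ i ∈ S, p ^ e ∣ i := by
  induction S using Finset.induction_on with
  | empty =>
    simp only [Finset.lcm_empty, Nat.dvd_one, Finset.notMem_empty, false_and, exists_false, iff_false]
    exact (Nat.one_lt_pow (by omega) hp.one_lt).ne'
  | insert a S ha ih =>
    have ih := ih (fun i hi => hS i (Finset.mem_insert_of_mem hi))
    have h1 : a ≠ 0 := (hS a (Finset.mem_insert_self _ _)).ne'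
    have h2 : S.lcm id ≠ 0 := by
      rw [Ne, Finset.lcm_eq_zero_iff]
      rintro ⟨x, hx, h0⟩
      have := hS x (Finset.mem_insert_of_mem hx)
      simp at h0; omega
    rw [Finset.lcm_insert, Finset.exists_mem_insert, ← ih]
    have e1 : GCDMonoid.lcm (id a) (S.lcm id) = Nat.lcm a (S.lcm id) := rfl
    rw [e1, hp.pow_dvd_iff_le_factorization (Nat.lcm_ne_zero h1 h2),
      hp.pow_dvd_iff_le_factorization h1, hp.pow_dvd_iff_le_factorization h2,
      Nat.factorization_lcm h1 h2, Finsupp.sup_apply, le_sup_iff]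

lemma fact_sum (p n b : ℕ) (hp : p.Prime) (hn : 0 < n) (hb : n.factorization p ≤ b) :
    n.factorization p = ∑ e ∈ Finset.Icc 1 b, if p ^ e ∣ n then 1 else 0 := by
  rw [Finset.sum_boole]
  have : (Finset.Icc 1 b).filter (fun e => p ^ e ∣ n) = Finset.Icc 1 (n.factorization p) := by
    ext e
    simp only [Finset.mem_filter, Finset.mem_Icc, hp.pow_dvd_iff_le_factorization hn.ne']
    omega
  rw [this]; simp

def m (k p : ℕ) : ℕ := (Finset.Icc 1 (k - 1)).sup (fun i => i.factorization p)

lemma le_m_iff (k p e : ℕ) (hp : p.Prime) (he : 1 ≤ e) : e ≤ m k p ↔ p ^ e < k := by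
  unfold m
  rw [Finset.le_sup_iff (Nat.lt_of_lt_of_le Nat.zero_lt_one he)]
  constructor
  · rintro ⟨i, hi, h⟩
    simp only [Finset.mem_Icc] at hi
    have := (hp.pow_dvd_iff_le_factorization (by omega)).2 h
    have := Nat.le_of_dvd (by omega) this
    omega
  · intro h
    have := Nat.pow_pos (n := e) hp.pos
    refine ⟨p ^ e, by simp only [Finset.mem_Icc]; omega, ?_⟩
    simp [hp.factorization_self]

lemma g_fact (k n p : ℕ) (hp : p.Prime) :
    (g k n).factorization p = ∑ e ∈ Finset.Icc 1 (m k p), (c k (p^e) n - 1) := by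
  set b := (P k n).factorization p + m k p with hbdef
  have hS : ∀ i ∈ Finset.Icc (n+1) (n+k), 0 < i := by
    intro i hi; simp at hi; omega
  have hP : (P k n).factorization p = ∑ e ∈ Finset.Icc 1 b, c k (p^e) n := by
    have h1 : (P k n).factorization p = ∑ i ∈ Finset.Icc (n+1) (n+k), i.factorization p := by
      unfold P
      rw [Nat.factorization_prod (fun i hi => (hS i hi).ne'), Finsupp.finset_sum_apply]
    have h2 : ∀ i ∈ Finset.Icc (n+1) (n+k), i.factorization p =
        ∑ e ∈ Finset.Icc 1 b, if p ^ e ∣ i then 1 else 0 := by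
      intro i hi
      apply fact_sum _ _ _ hp (hS i hi)
      have := (Nat.factorization_le_iff_dvd (hS i hi).ne' (P_pos k n).ne').2
        (Finset.dvd_prod_of_mem (fun i => i) hi) p
      omega
    rw [h1, Finset.sum_congr rfl h2, Finset.sum_comm]
    apply Finset.sum_congr rfl
    intro e _
    rw [Finset.sum_boole, card_eq]; simp
  have hL : (L k n).factorization p = ∑ e ∈ Finset.Icc 1 b, min 1 (c k (p^e) n) := by
    rw [fact_sum p _ b hp (L_pos k n)]
    · apply Finset.sum_congr rfl
      intro e he
      simp only [Finset.mem_Icc] at he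
      have := pow_dvd_lcm p e hp he.1 _ hS
      rw [← card_eq]
      unfold L
      split_ifs with h
      · have : 0 < ((Finset.Icc (n+1) (n+k)).filter (fun i => p ^ e ∣ i)).card := by
          rw [Finset.card_pos]
          obtain ⟨i, hi, hd⟩ := this.1 h
          exact ⟨i, by rw [Finset.mem_filter]; exact ⟨hi, hd⟩⟩
        omega
      · have : ((Finset.Icc (n+1) (n+k)).filter (fun i => p ^ e ∣ i)).card = 0 := by
          rw [Finset.card_eq_zero, Finset.filter_eq_empty_iff]
          intro i hi hd
          exact h (this.2 ⟨i, hi, hd⟩)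
        omega
    · have := (Nat.factorization_le_iff_dvd (L_pos k n).ne' (P_pos k n).ne').2 (L_dvd_P k n) p
      omega
  have hg : (L k n).factorization p + (g k n).factorization p = (P k n).factorization p := by
    rw [← L_mul_g, Nat.factorization_mul (L_pos k n).ne' (g_pos k n).ne']; rfl
  have h3 : ∑ e ∈ Finset.Icc 1 (m k p), (c k (p^e) n - 1) =
      ∑ e ∈ Finset.Icc 1 b, (c k (p^e) n - 1) := by
    apply Finset.sum_subset
    · apply Finset.Icc_subset_Icc_right; omega
    · intro e he he'
      simp only [Finset.mem_Icc] at he he'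
      have h4 : ¬ p ^ e < k := by
        rw [← le_m_iff k p e hp he.1]; omega
      have := c_le_one k (p^e) n (Nat.pow_pos hp.pos) (by omega)
      omega
  have h5 : ∑ e ∈ Finset.Icc 1 b, min 1 (c k (p^e) n) + ∑ e ∈ Finset.Icc 1 b, (c k (p^e) n - 1)
      = ∑ e ∈ Finset.Icc 1 b, c k (p^e) n := by
    rw [← Finset.sum_add_distrib]
    apply Finset.sum_congr rfl
    intro e _; omega
  omega

lemma g_zero_dvd (k n : ℕ) : g k 0 ∣ g k n := by
  rw [← Nat.factorization_prime_le_iff_dvd (g_pos k 0).ne' (g_pos k n).ne']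
  intro p hp
  rw [g_fact _ _ _ hp, g_fact _ _ _ hp]
  apply Finset.sum_le_sum
  intro e _
  have := c_zero_le k (p^e) n
  omega

lemma L_zero_dvd (k n : ℕ) : L k 0 ∣ L k n := by
  apply Finset.lcm_dvd
  intro i hi
  simp only [Finset.mem_Icc] at hi
  have h1 := Nat.div_add_mod n i
  have h2 := Nat.mod_lt n (show i > 0 by omega)
  have : i * (n / i + 1) ∣ L k n := by
    apply Finset.dvd_lcm (f := id) (b := i * (n/i+1))
    simp only [Finset.mem_Icc, mul_add]; omega
  exact (Dvd.intro _ rfl).trans this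

lemma P_eq (k n : ℕ) : P k n = (n+k).choose k * k.factorial := by
  have : P k n * n.factorial = (n+k).factorial := by
    unfold P
    induction k with
    | zero => simp
    | succ k ih =>
      have h1 : Finset.Icc (n+1) (n+(k+1)) = insert (n+k+1) (Finset.Icc (n+1) (n+k)) := by
        ext x; simp only [Finset.mem_Icc, Finset.mem_insert]; omega
      rw [h1, Finset.prod_insert (by simp), ← add_assoc n k 1, Nat.factorial_succ, ← ih, mul_assoc]
  have h2 := Nat.add_choose_mul_factorial_mul_factorial n k
  have h3 : (n+k).choose k = (n+k).choose n := by
    rw [Nat.choose_symm_add]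
  apply Nat.eq_of_mul_eq_mul_right (Nat.factorial_pos n)
  rw [this, ← h2, h3]; ring

lemma f_eq (k n : ℕ) : (n+k).choose k / lcmBinom (n+k) k * g k 0 = g k n := by
  obtain ⟨q, hq⟩ := L_zero_dvd k n
  obtain ⟨r, hr⟩ := g_zero_dvd k n
  have hb : lcmBinom (n+k) k = q := by
    have : lcmBinom (n+k) k = L k n / L k 0 := by
      unfold lcmBinom rangeLcm L
      simp
    rw [this, hq, Nat.mul_div_cancel_left _ (L_pos k 0)]
  have h1 := P_eq k n
  have h2 : P k 0 = k.factorial := by rw [P_eq]; simp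
  rw [← h2, ← L_mul_g, ← L_mul_g, hq, hr] at h1
  have hc : (n+k).choose k = q * r := by
    apply Nat.eq_of_mul_eq_mul_right (Nat.mul_pos (L_pos k 0) (g_pos k 0))
    rw [← h1]; ring
  have hq0 : 0 < q := by
    rcases Nat.eq_zero_or_pos q with h | h
    · have := L_pos k n; simp [hq, h] at this
    · exact h
  rw [hb, hc, Nat.mul_div_cancel_left _ hq0, hr, mul_comm]

lemma per_iff (k t : ℕ) :
    (∀ n, k ≤ n → (n + t).choose k / lcmBinom (n + t) k = n.choose k / lcmBinom n k) ↔
      ∀ n, g k (n + t) = g k n := by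
  constructor
  · intro h n
    have := h (n + k) (by omega)
    rw [← f_eq k (n + t), ← f_eq k n, ← this, show n + t + k = n + k + t by ring]
  · intro h n hn
    obtain ⟨j, rfl⟩ := Nat.exists_eq_add_of_le' hn
    apply Nat.eq_of_mul_eq_mul_right (g_pos k 0)
    rw [show j + k + t = j + t + k by ring, f_eq, f_eq, h]

lemma per_mul (k t : ℕ) (h : ∀ n, g k (n + t) = g k n) (s n : ℕ) : g k (n + t * s) = g k n := by
  induction s with
  | zero => simp
  | succ s ih => rw [mul_add, mul_one, ← add_assoc, h, ih]

lemma key (k p t : ℕ) (hp : p.Prime) (ht : 0 < t) (h : ∀ n, g k (n + t) = g k n)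
    (hm : k.factorization p < m k p) (hk : 1 ≤ k) : p ^ m k p ∣ t := by
  by_contra hnd
  set M := m k p with hM
  rw [hp.pow_dvd_iff_le_factorization ht.ne'] at hnd
  set j := t.factorization p with hj
  set t2 := t * p ^ (M - 1 - j) with ht2
  have hp0 : ∀ e, 0 < p ^ e := fun e => Nat.pow_pos hp.pos
  have h20 : t2 ≠ 0 := (Nat.mul_pos ht (hp0 _)).ne'
  have hf2 : t2.factorization p = M - 1 := by
    rw [ht2, Nat.factorization_mul ht.ne' (hp0 _).ne']
    simp [hp.factorization_self]
    omega
  have hd : ∀ n, c k (p ^ M) (n + t2) = c k (p ^ M) n := by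
    intro n
    have h1 : (g k (n+t2)).factorization p = (g k n).factorization p := by
      rw [ht2, per_mul k t h]
    rw [g_fact _ _ _ hp, g_fact _ _ _ hp, ← hM] at h1
    obtain ⟨r, hr⟩ : ∃ r, M = r + 1 := ⟨M - 1, by omega⟩
    rw [hr, Finset.sum_Icc_succ_top (by omega), Finset.sum_Icc_succ_top (by omega)] at h1
    have h2 : ∑ e ∈ Finset.Icc 1 r, (c k (p^e) (n+t2) - 1) =
        ∑ e ∈ Finset.Icc 1 r, (c k (p^e) n - 1) := by
      apply Finset.sum_congr rfl
      intro e he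
      simp only [Finset.mem_Icc] at he
      rw [c_per _ _ _ _ (hp0 _)]
      rw [hp.pow_dvd_iff_le_factorization h20]; omega
    have h3 : p ^ M < k := (le_m_iff k p M hp (by omega)).1 le_rfl
    have h4 := one_le_c k (p^M) n (hp0 _) h3.le
    have h5 := one_le_c k (p^M) (n+t2) (hp0 _) h3.le
    rw [← hr] at h1
    omega
  have hnk : ¬ p ^ M ∣ k := by
    rw [hp.pow_dvd_iff_le_factorization (by omega)]; omega
  have hnt : ¬ p ^ M ∣ t2 := by
    rw [hp.pow_dvd_iff_le_factorization h20]; omega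
  obtain ⟨n, hn⟩ : ∃ n, n + 1 = p ^ M := ⟨p ^ M - 1, by have := hp0 M; omega⟩
  have a1 := c_succ k (p^M) n
  have a2 := c_succ k (p^M) (n+t2)
  have b1 : p ^ M ∣ n + 1 := by rw [hn]
  have b2 : ¬ p ^ M ∣ n + k + 1 := by
    rw [show n + k + 1 = (n+1) + k by ring, Nat.dvd_add_right b1]; exact hnk
  have b3 : ¬ p ^ M ∣ n + t2 + 1 := by
    rw [show n + t2 + 1 = (n+1) + t2 by ring, Nat.dvd_add_right b1]; exact hnt
  rw [if_pos b1, if_neg b2] at a1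
  rw [if_neg b3, show n + t2 + 1 = n + 1 + t2 by ring, hd, hd] at a2
  omega

end LB

/-- For `k ≥ 1`, the sequence `n ↦ C(n, k) / [n, k]` (for `n ≥ k`) is
periodic and its smallest period is
`T_k = ∏_{p prime, p < k} p^{α_p}`, where `α_p = 0` if
`v_p(k) ≥ max_{1 ≤ i < k} v_p(i)` and `α_p = max_{1 ≤ i < k} v_p(i)` otherwise. -/
theorem choose_div_lcmBinom_periodic_smallest_period (k : ℕ) (hk : 1 ≤ k) :
    let α : ℕ → ℕ := fun p =>
      if (Finset.Icc 1 (k - 1)).sup (fun i => i.factorization p) ≤ k.factorization p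
        then 0 else (Finset.Icc 1 (k - 1)).sup (fun i => i.factorization p)
    let T : ℕ := ∏ p ∈ (Finset.range k).filter Nat.Prime, p ^ α p
    0 < T ∧ (∀ n, k ≤ n → (n + T).choose k / lcmBinom (n + T) k = n.choose k / lcmBinom n k) ∧
      ∀ T' : ℕ, 0 < T' →
        (∀ n, k ≤ n → (n + T').choose k / lcmBinom (n + T') k = n.choose k / lcmBinom n k) →
        T ≤ T' := by
  intro α T
  have hα : ∀ p, α p = if LB.m k p ≤ k.factorization p then 0 else LB.m k p := fun p => rfl
  have hT0 : 0 < T := by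
    apply Finset.prod_pos
    intro p hp
    exact Nat.pow_pos (Finset.mem_filter.1 hp).2.pos
  refine ⟨hT0, ?_, ?_⟩
  · rw [LB.per_iff]
    intro n
    apply Nat.eq_of_factorization_eq (LB.g_pos _ _).ne' (LB.g_pos _ _).ne'
    intro p
    by_cases hp : p.Prime
    · rw [LB.g_fact _ _ _ hp, LB.g_fact _ _ _ hp]
      apply Finset.sum_congr rfl
      intro e he
      simp only [Finset.mem_Icc] at he
      have hp0 : 0 < p ^ e := Nat.pow_pos hp.pos
      by_cases h : LB.m k p ≤ k.factorization p
      · have : p ^ e ∣ k := by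
          rw [hp.pow_dvd_iff_le_factorization (by omega)]; omega
        rw [LB.c_const _ _ _ hp0 this, LB.c_const _ _ _ hp0 this]
      · have hpk : p < k := by
          have := (LB.le_m_iff k p e hp he.1).1 he.2
          have := Nat.le_self_pow (show e ≠ 0 by omega) p
          omega
        have h1 : p ^ α p ∣ T := Finset.dvd_prod_of_mem (fun p => p ^ α p)
          (Finset.mem_filter.2 ⟨Finset.mem_range.2 hpk, hp⟩)
        rw [hα, if_neg h] at h1
        rw [LB.c_per _ _ _ _ hp0 ((pow_dvd_pow p he.2).trans h1)]
    · rw [Nat.factorization_eq_zero_of_not_prime _ hp, Nat.factorization_eq_zero_of_not_prime _ hp]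
  · intro T' hT' h
    rw [LB.per_iff] at h
    apply Nat.le_of_dvd hT'
    apply Finset.prod_dvd_of_isRelPrime
    · intro p hp q hq hpq
      have hp' := (Finset.mem_filter.1 hp).2
      have hq' := (Finset.mem_filter.1 hq).2
      exact Nat.coprime_iff_isRelPrime.1 (Nat.Coprime.pow _ _ ((Nat.coprime_primes hp' hq').2 hpq))
    · intro p hp
      have hp' := (Finset.mem_filter.1 hp).2
      show p ^ α p ∣ T'
      rw [hα]
      split_ifs with hc
      · simp
      · exact LB.key k p T' hp' hT' h (by omega) hk
end

section
/- For every natural number k ≥ 1, the positive integer lcm(1, 2, …, k−1) is a period of the sequence n ↦ C(n, k) / [n, k]; that is, for all n ≥ k, C(n + lcm(1, …, k−1), k) / [n + lcm(1, …, k−1), k] = C(n, k) / [n, k]. -/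
theorem aux_gcd_lcm {x y z : ℕ} (hx : x ≠ 0) (hy : y ≠ 0) (hz : z ≠ 0) :
    Nat.gcd x (Nat.lcm y z) = Nat.lcm (Nat.gcd x y) (Nat.gcd x z) := by
  have h1 : Nat.gcd x y ≠ 0 := Nat.gcd_ne_zero_left hx
  have h2 : Nat.gcd x z ≠ 0 := Nat.gcd_ne_zero_left hx
  have h3 : Nat.lcm y z ≠ 0 := Nat.lcm_ne_zero hy hz
  apply Nat.eq_of_factorization_eq (Nat.gcd_ne_zero_left hx) (Nat.lcm_ne_zero h1 h2)
  intro p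
  rw [Nat.factorization_gcd hx h3, Nat.factorization_lcm hy hz, Nat.factorization_lcm h1 h2,
    Nat.factorization_gcd hx hy, Nat.factorization_gcd hx hz]
  simp only [Finsupp.inf_apply, Finsupp.sup_apply]
  exact inf_sup_left _ _ _

theorem aux_gcd_finset {x : ℕ} (hx : x ≠ 0) (s : Finset ℕ) (f : ℕ → ℕ) (hf : ∀ i, f i ≠ 0) :
    Nat.gcd x (s.lcm f) = s.lcm (fun i => Nat.gcd x (f i)) := by
  induction s using Finset.induction_on with
  | empty => simp
  | insert a s ha ih =>
    rw [Finset.lcm_insert, Finset.lcm_insert, ← ih]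
    exact aux_gcd_lcm hx (hf a) (Finset.lcm_ne_zero_iff.2 fun i _ => hf i)

theorem aux_main (s : Finset ℕ) (f g : ℕ → ℕ) (hf : ∀ i, f i ≠ 0) (hg : ∀ i, g i ≠ 0)
    (h : ∀ i ∈ s, ∀ j ∈ s, i ≠ j → Nat.gcd (f i) (f j) = Nat.gcd (g i) (g j)) :
    ∃ G, ∏ i ∈ s, f i = s.lcm f * G ∧ ∏ i ∈ s, g i = s.lcm g * G := by
  induction s using Finset.induction_on with
  | empty => exact ⟨1, by simp⟩
  | insert a s ha ih =>
    obtain ⟨G, h1, h2⟩ := ih (fun i hi j hj => h i (by simp [hi]) j (by simp [hj]))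
    have key : Nat.gcd (f a) (s.lcm f) = Nat.gcd (g a) (s.lcm g) := by
      rw [aux_gcd_finset (hf a) s f hf, aux_gcd_finset (hg a) s g hg]
      apply Finset.lcm_congr rfl
      intro i hi
      exact h a (by simp) i (by simp [hi]) (by rintro rfl; exact ha hi)
    refine ⟨Nat.gcd (f a) (s.lcm f) * G, ?_, ?_⟩
    · rw [Finset.prod_insert ha, Finset.lcm_insert, h1, ← mul_assoc, ← mul_assoc]
      congr 1
      exact (Nat.gcd_mul_lcm _ _).symm.trans (mul_comm _ _)
    · rw [key, Finset.prod_insert ha, Finset.lcm_insert, h2, ← mul_assoc, ← mul_assoc]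
      congr 1
      exact (Nat.gcd_mul_lcm _ _).symm.trans (mul_comm _ _)

theorem aux_rangeLcm (m k : ℕ) :
    rangeLcm (m + 1) (m + k) = (Finset.range k).lcm (fun i => m + 1 + i) := by
  rw [rangeLcm, Finset.lcm_eq_lcm_image (s := Finset.range k)]
  congr 1
  ext x
  simp only [Finset.mem_Icc, Finset.mem_image, Finset.mem_range]
  constructor
  · intro h
    exact ⟨x - (m + 1), by omega, by omega⟩
  · rintro ⟨i, hi, rfl⟩
    omega

theorem aux_dvd (m k : ℕ) : rangeLcm 1 k ∣ rangeLcm (m + 1) (m + k) := by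
  apply Finset.lcm_dvd
  intro j hj
  rw [Finset.mem_Icc] at hj
  have h1 : j * (m / j) + m % j = m := Nat.div_add_mod m j
  have h2 : m % j < j := Nat.mod_lt _ (by omega)
  have h3 : j ∣ j * (m / j) + j := ⟨m / j + 1, by ring⟩
  refine h3.trans ?_
  exact Finset.dvd_lcm (f := id) (by rw [Finset.mem_Icc]; omega)

theorem aux_gcd_shift (k m i j : ℕ) (hij : i < j) (hj : j < k) :
    Nat.gcd (m + 1 + i) (m + 1 + j) =
      Nat.gcd (m + rangeLcm 1 (k - 1) + 1 + i) (m + rangeLcm 1 (k - 1) + 1 + j) := by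
  have hd : j - i ∣ rangeLcm 1 (k - 1) :=
    Finset.dvd_lcm (f := id) (by rw [Finset.mem_Icc]; omega)
  obtain ⟨c, hc⟩ := hd
  obtain ⟨d, rfl⟩ := Nat.exists_eq_add_of_lt hij
  have e : i + d + 1 - i = d + 1 := by omega
  rw [e] at hc
  rw [hc]
  have a1 : m + 1 + (i + d + 1) = (m + 1 + i) + (d + 1) := by ring
  have a2 : m + (d + 1) * c + 1 + (i + d + 1) = (m + (d + 1) * c + 1 + i) + (d + 1) := by ring
  have a3 : m + (d + 1) * c + 1 + i = (m + 1 + i) + (d + 1) * c := by ring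
  rw [a1, a2, a3, Nat.gcd_self_add_right, Nat.gcd_self_add_right, Nat.gcd_add_mul_left_left]

theorem aux_quot (m k G : ℕ)
    (h : ∏ i ∈ Finset.range k, (m + 1 + i) = (Finset.range k).lcm (fun i => m + 1 + i) * G) :
    (m + k).choose k / lcmBinom (m + k) k = rangeLcm 1 k * G / k.factorial := by
  rw [← aux_rangeLcm, ← Nat.ascFactorial_eq_prod_range,
    Nat.ascFactorial_eq_factorial_mul_choose] at h
  have hL : rangeLcm 1 k ≠ 0 := Finset.lcm_ne_zero_iff.2 fun i hi => by
    rw [Finset.mem_Icc] at hi; simp only [id]; omega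
  have hM : rangeLcm (m + 1) (m + k) ≠ 0 := Finset.lcm_ne_zero_iff.2 fun i hi => by
    rw [Finset.mem_Icc] at hi; simp only [id]; omega
  obtain ⟨B, hB⟩ := aux_dvd m k
  have hB0 : 0 < B := Nat.pos_of_ne_zero (by rintro rfl; exact hM (by simpa using hB))
  have e : lcmBinom (m + k) k = B := by
    rw [lcmBinom, Nat.add_sub_cancel, hB, Nat.mul_div_cancel_left _ (Nat.pos_of_ne_zero hL)]
  rw [e, ← Nat.mul_div_mul_left _ _ k.factorial_pos, h, hB,
    ← Nat.mul_div_mul_right (rangeLcm 1 k * G) _ hB0]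
  congr 1
  ring

/-- For `k ≥ 1`, `lcm(1, 2, …, k-1)` is a period of `n ↦ C(n, k) / [n, k]`. -/
theorem rangeLcm_period_choose_div_lcmBinom (k : ℕ) (hk : 1 ≤ k) (n : ℕ) (hn : k ≤ n) :
    (n + rangeLcm 1 (k - 1)).choose k / lcmBinom (n + rangeLcm 1 (k - 1)) k =
      n.choose k / lcmBinom n k := by
  obtain ⟨m, rfl⟩ := Nat.exists_eq_add_of_le' hn
  obtain ⟨G, h1, h2⟩ := aux_main (Finset.range k) (fun i => m + 1 + i)
    (fun i => m + rangeLcm 1 (k - 1) + 1 + i) (fun i => by omega) (fun i => by omega) (by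
      intro i hi j hj hij
      rw [Finset.mem_range] at hi hj
      rcases lt_or_gt_of_ne hij with h | h
      · exact aux_gcd_shift k m i j h hj
      · rw [Nat.gcd_comm, Nat.gcd_comm (m + rangeLcm 1 (k - 1) + 1 + i)]
        exact aux_gcd_shift k m j i h hi)
  rw [add_right_comm, aux_quot m k G h1, aux_quot _ k G h2]
end

section
/- For every natural number k ≥ 1, the function g_k(n) := n(n+1)⋯(n+k) / lcm(n, n+1, …, n+k) on positive integers is periodic, and its smallest period is P_k = ∏_{p prime, p ≤ k} p^{β_p}, where β_p = 0 if v_p(k+1) ≥ max_{1 ≤ i ≤ k} v_p(i), and β_p = max_{1 ≤ i ≤ k} v_p(i) otherwise (v_p denoting the p-adic valuation). -/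
/-- truncated valuation -/
def tv (p k m : ℕ) : ℕ := min (Nat.log p k) (m.factorization p)

lemma sup_eq_log (p k : ℕ) (hp : p.Prime) (hk : 1 ≤ k) :
    (Finset.Icc 1 k).sup (fun i => i.factorization p) = Nat.log p k := by
  apply le_antisymm
  · apply Finset.sup_le
    intro i hi
    rw [Finset.mem_Icc] at hi
    apply Nat.le_log_of_pow_le hp.one_lt
    exact (Nat.le_of_dvd (by omega) (Nat.ordProj_dvd i p)).trans hi.2
  · have h : p ^ Nat.log p k ∈ Finset.Icc 1 k := by
      rw [Finset.mem_Icc]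
      exact ⟨Nat.pos_of_ne_zero (pow_ne_zero _ hp.ne_zero), Nat.pow_log_le_self p (by omega)⟩
    have := Finset.le_sup (f := fun i : ℕ => i.factorization p) h
    simpa [hp.factorization_pow] using this

lemma tv_add (p k m d : ℕ) (hp : p.Prime) (hm : m ≠ 0) (hd : p ^ Nat.log p k ∣ d) :
    tv p k (m + d) = tv p k m := by
  have key : ∀ x, x ≠ 0 → tv p k x = (Nat.gcd x (p ^ Nat.log p k)).factorization p := by
    intro x hx
    rw [Nat.factorization_gcd hx (pow_ne_zero _ hp.ne_zero)]
    simp [tv, hp.factorization_pow, min_comm]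
  obtain ⟨c, rfl⟩ := hd
  rw [key _ (by omega), key _ hm]
  simp

lemma fact_lcm (p : ℕ) (s : Finset ℕ) (hs : ∀ x ∈ s, x ≠ 0) :
    (s.lcm id).factorization p = s.sup (fun i => i.factorization p) := by
  induction s using Finset.induction_on with
  | empty => simp
  | insert a s ha ih =>
    have h0 : s.lcm id ≠ 0 := by
      rw [Ne, Finset.lcm_eq_zero_iff]
      rintro ⟨x, hx, hx0⟩
      exact hs x (Finset.mem_insert_of_mem hx) hx0
    rw [Finset.lcm_insert, Finset.sup_insert, ← ih (fun x hx => hs x (Finset.mem_insert_of_mem hx))]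
    change (Nat.lcm a (s.lcm id)).factorization p = _
    rw [Nat.factorization_lcm (hs a (Finset.mem_insert_self _ _)) h0]
    rfl

lemma lcm_dvd_prod' (k n : ℕ) : rangeLcm n (n + k) ∣ ∏ i ∈ Finset.Icc n (n + k), i := by
  apply Finset.lcm_dvd
  intro b hb
  exact Finset.dvd_prod_of_mem (fun i => i) hb

lemma farhi_ne_zero (k n : ℕ) (hn : 1 ≤ n) : farhiG k n ≠ 0 := by
  have h0 : ∏ i ∈ Finset.Icc n (n + k), i ≠ 0 := by
    rw [Finset.prod_ne_zero_iff]
    intro a ha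
    rw [Finset.mem_Icc] at ha
    omega
  unfold farhiG
  intro h
  have := Nat.div_mul_cancel (lcm_dvd_prod' k n)
  rw [h] at this
  omega

lemma key (p k n : ℕ) (hp : p.Prime) (hk : 1 ≤ k) (hn : 1 ≤ n) :
    (farhiG k n).factorization p + Nat.log p k = ∑ m ∈ Finset.Icc n (n + k), tv p k m := by
  have hne : ∀ x ∈ Finset.Icc n (n + k), x ≠ 0 := by
    intro x hx
    rw [Finset.mem_Icc] at hx
    omega
  have h1 : (farhiG k n).factorization p + (rangeLcm n (n+k)).factorization p
      = ∑ m ∈ Finset.Icc n (n + k), m.factorization p := by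
    have e := Nat.div_mul_cancel (lcm_dvd_prod' k n)
    have hl : rangeLcm n (n+k) ≠ 0 := by
      unfold rangeLcm
      rw [Ne, Finset.lcm_eq_zero_iff]
      rintro ⟨x, hx, hx0⟩
      exact hne x hx hx0
    have e2 := congrArg (fun x => x.factorization p) e
    change (farhiG k n * _).factorization p = _ at e2
    rw [Nat.factorization_mul (farhi_ne_zero k n hn) hl, Nat.factorization_prod hne] at e2
    simpa using e2
  unfold rangeLcm at h1
  rw [fact_lcm p _ hne] at h1
  obtain ⟨m0, hm0, hmax⟩ := Finset.exists_mem_eq_sup (Finset.Icc n (n+k))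
    ⟨n, by simp⟩ (fun i => i.factorization p)
  have hle : ∀ m ∈ Finset.Icc n (n+k), m.factorization p ≤ m0.factorization p := by
    intro m hm
    have := Finset.le_sup (f := fun i : ℕ => i.factorization p) hm
    rw [hmax] at this
    exact this
  rw [hmax] at h1
  have hqk : p ^ Nat.log p k ≤ k := Nat.pow_log_le_self p (by omega)
  have hq0 : 0 < p ^ Nat.log p k := Nat.pos_of_ne_zero (pow_ne_zero _ hp.ne_zero)
  have hlog : Nat.log p k ≤ m0.factorization p := by
    set q := p ^ Nat.log p k with hq
    have hdm := Nat.div_add_mod (n + q - 1) q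
    have hml := Nat.mod_lt (n + q - 1) hq0
    have hmem : q * ((n + q - 1) / q) ∈ Finset.Icc n (n+k) := by
      rw [Finset.mem_Icc]; omega
    refine le_trans ?_ (hle _ hmem)
    rw [← hp.pow_dvd_iff_le_factorization (hne _ hmem), ← hq]
    exact dvd_mul_right _ _
  have hoth : ∀ m ∈ (Finset.Icc n (n+k)).erase m0, tv p k m = m.factorization p := by
    intro m hm
    rw [Finset.mem_erase] at hm
    obtain ⟨hmm, hm⟩ := hm
    apply min_eq_right
    by_contra! hlt
    have d1 : p ^ (Nat.log p k + 1) ∣ m :=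
      (hp.pow_dvd_iff_le_factorization (hne _ hm)).2 hlt
    have d2 : p ^ (Nat.log p k + 1) ∣ m0 :=
      (hp.pow_dvd_iff_le_factorization (hne _ hm0)).2 (le_trans hlt (hle m hm))
    have hbig : k < p ^ (Nat.log p k + 1) := Nat.lt_pow_succ_log_self hp.one_lt k
    rw [Finset.mem_Icc] at hm hm0
    rcases lt_or_gt_of_ne hmm with h | h
    · have := Nat.le_of_dvd (by omega) (Nat.dvd_sub d2 d1)
      omega
    · have := Nat.le_of_dvd (by omega) (Nat.dvd_sub d1 d2)
      omega
  rw [← Finset.add_sum_erase _ _ hm0] at h1 ⊢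
  rw [Finset.sum_congr rfl hoth]
  have : tv p k m0 = Nat.log p k := min_eq_left hlog
  omega

lemma step (p k n : ℕ) (hp : p.Prime) (hk : 1 ≤ k) (hn : 1 ≤ n) :
    (farhiG k (n+1)).factorization p + tv p k n
      = (farhiG k n).factorization p + tv p k (n + k + 1) := by
  have h1 := key p k n hp hk hn
  have h2 := key p k (n+1) hp hk (by omega)
  have h3 : ∑ m ∈ Finset.Icc n (n + k + 1), tv p k m
      = ∑ m ∈ Finset.Icc n (n + k), tv p k m + tv p k (n+k+1) :=
    Finset.sum_Icc_succ_top (by omega) _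
  have h4 : ∑ m ∈ Finset.Icc n (n + k + 1), tv p k m
      = tv p k n + ∑ m ∈ Finset.Icc (n+1) (n + k + 1), tv p k m := by
    rw [← Finset.insert_Icc_add_one_left_eq_Icc (by omega), Finset.sum_insert (by simp)]
  rw [show n + 1 + k = n + k + 1 by ring] at h2
  omega

theorem farhiG_periodic_smallest_period (k : ℕ) (hk : 1 ≤ k) :
    let β : ℕ → ℕ := fun p =>
      if (Finset.Icc 1 k).sup (fun i => i.factorization p) ≤ (k + 1).factorization p
        then 0 else (Finset.Icc 1 k).sup (fun i => i.factorization p)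
    let P : ℕ := ∏ p ∈ (Finset.range (k + 1)).filter Nat.Prime, p ^ β p
    0 < P ∧ (∀ n, 1 ≤ n → farhiG k (n + P) = farhiG k n) ∧
      ∀ T : ℕ, 0 < T → (∀ n, 1 ≤ n → farhiG k (n + T) = farhiG k n) → P ≤ T := by
  intro β P
  have hβ : ∀ p, p.Prime → β p = if Nat.log p k ≤ (k+1).factorization p then 0
      else Nat.log p k := by
    intro p hp
    simp only [β, sup_eq_log p k hp hk]
  refine ⟨?_, ?_, ?_⟩
  · apply Finset.prod_pos
    intro p hp
    exact pow_pos (Finset.mem_filter.1 hp).2.pos _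
  · intro n hn
    apply Nat.eq_of_factorization_eq (farhi_ne_zero _ _ (by omega)) (farhi_ne_zero _ _ hn)
    intro p
    by_cases hp : p.Prime
    swap
    · simp [Nat.factorization_eq_zero_of_not_prime _ hp]
    by_cases hc : Nat.log p k ≤ (k+1).factorization p
    · have hd : p ^ Nat.log p k ∣ k + 1 := (hp.pow_dvd_iff_le_factorization (by omega)).2 hc
      have : ∀ d, (farhiG k (n + d)).factorization p = (farhiG k n).factorization p := by
        intro d
        induction d with
        | zero => rfl
        | succ d ih =>
          have h1 := step p k (n+d) hp hk (by omega)
          have h2 := tv_add p k (n+d) (k+1) hp (by omega) hd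
          rw [show n + d + (k+1) = n + d + k + 1 by ring] at h2
          rw [show n + (d + 1) = n + d + 1 by ring]
          omega
      exact this P
    · have hpk : p ≤ k := by
        by_contra! h
        rw [Nat.log_of_lt h] at hc
        omega
      have hd : p ^ Nat.log p k ∣ P := by
        have : p ^ β p ∣ P := Finset.dvd_prod_of_mem (fun p => p ^ β p)
          (Finset.mem_filter.2 ⟨Finset.mem_range.2 (by omega), hp⟩)
        rwa [hβ p hp, if_neg hc] at this
      have h1 := key p k n hp hk hn
      have h2 := key p k (n+P) hp hk (by omega)
      have h3 : ∑ m ∈ Finset.Icc (n+P) (n + P + k), tv p k m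
          = ∑ m ∈ Finset.Icc n (n + k), tv p k m := by
        rw [show n + P + k = n + k + P by ring, ← Finset.map_add_right_Icc, Finset.sum_map]
        apply Finset.sum_congr rfl
        intro m hm
        rw [Finset.mem_Icc] at hm
        exact tv_add p k m P hp (by omega) hd
      omega
  · intro T hT hper
    apply Nat.le_of_dvd hT
    apply Finset.prod_dvd_of_isRelPrime
    · intro p hp q hq hpq
      simp only [Finset.coe_filter, Set.mem_ofPred_eq] at hp hq
      exact Nat.coprime_iff_isRelPrime.1
        (Nat.Coprime.pow _ _ ((Nat.coprime_primes hp.2 hq.2).2 hpq))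
    · intro p hp
      have hp := (Finset.mem_filter.1 hp).2
      rw [hβ p hp]
      split_ifs with hc
      · simp
      rw [hp.pow_dvd_iff_le_factorization (by omega)]
      by_contra! hlt
      set q := p ^ Nat.log p k with hq
      have hq0 : 0 < q := Nat.pos_of_ne_zero (pow_ne_zero _ hp.ne_zero)
      have s1 := step p k q hp hk hq0
      have s2 := step p k (q + T) hp hk (by omega)
      rw [show q + T + 1 = (q + 1) + T by ring, hper _ (by omega), hper _ (by omega)] at s2
      have a1 : tv p k q = Nat.log p k := by
        simp [tv, hq, hp.factorization_pow]
      have a2 : tv p k (q + k + 1) = tv p k (k+1) := by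
        rw [show q + k + 1 = (k + 1) + q by ring]
        exact tv_add p k _ q hp (by omega) dvd_rfl
      have a3 : tv p k (q + T) = tv p k T := by
        rw [add_comm]
        exact tv_add p k _ q hp (by omega) dvd_rfl
      have a4 : tv p k (q + T + k + 1) = tv p k (T + k + 1) := by
        rw [show q + T + k + 1 = (T + k + 1) + q by ring]
        exact tv_add p k _ q hp (by omega) dvd_rfl
      have a5 : min ((k+1).factorization p) (T.factorization p) ≤ (T + k + 1).factorization p := by
        rw [← hp.pow_dvd_iff_le_factorization (by omega), add_assoc]
        apply dvd_add
        · exact (hp.pow_dvd_iff_le_factorization (by omega)).2 (min_le_right _ _)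
        · exact (hp.pow_dvd_iff_le_factorization (by omega)).2 (min_le_left _ _)
      rw [a1, a2] at s1
      rw [a3, a4] at s2
      unfold tv at s1 s2
      omega
end

section
/- Let p be a prime and let n ≥ k ≥ 1 be natural numbers. Then the p-adic valuation of lcm(n, n−1, …, n−k+1) equals the greatest natural number α such that ⌊n/p^α⌋ − ⌊(n−k)/p^α⌋ ≥ 1. -/
theorem aux_pow_dvd_lcm (p α : ℕ) (hp : p.Prime) (hα : α ≠ 0) (s : Finset ℕ)
    (h0 : ∀ m ∈ s, m ≠ 0) (h : p ^ α ∣ s.lcm id) : ∃ m ∈ s, p ^ α ∣ m := by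
  induction s using Finset.induction_on with
  | empty =>
    simp only [Finset.lcm_empty, Nat.dvd_one] at h
    exact absurd h (Nat.one_lt_pow hα hp.one_lt).ne'
  | insert a s ha ih =>
    rw [Finset.lcm_insert] at h
    have ha0 : a ≠ 0 := h0 a (Finset.mem_insert_self a s)
    have hs0 : s.lcm id ≠ 0 := by
      intro hz
      rw [Finset.lcm_eq_zero_iff] at hz
      obtain ⟨x, hx, hx0⟩ := hz
      exact h0 x (Finset.mem_insert_of_mem hx) hx0
    have h' : p ^ α ∣ Nat.lcm a (s.lcm id) := h
    rw [hp.pow_dvd_iff_le_factorization (Nat.lcm_ne_zero ha0 hs0),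
      Nat.factorization_lcm ha0 hs0, Finsupp.sup_apply, le_sup_iff,
      ← hp.pow_dvd_iff_le_factorization ha0, ← hp.pow_dvd_iff_le_factorization hs0] at h'
    rcases h' with h' | h'
    · exact ⟨a, Finset.mem_insert_self a s, h'⟩
    · obtain ⟨m, hm, hd⟩ := ih (fun m hm => h0 m (Finset.mem_insert_of_mem hm)) h'
      exact ⟨m, Finset.mem_insert_of_mem hm, hd⟩

/-- For `p` prime and `n ≥ k ≥ 1`, the `p`-adic valuation of
`lcm(n, n-1, …, n-k+1)` is the greatest `α` with `⌊n/p^α⌋ - ⌊(n-k)/p^α⌋ ≥ 1`. -/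
theorem factorization_rangeLcm_eq_greatest (p n k : ℕ) (hp : p.Prime)
    (hk : 1 ≤ k) (h : k ≤ n) :
    let a := (rangeLcm (n - k + 1) n).factorization p
    1 ≤ n / p ^ a - (n - k) / p ^ a ∧
      ∀ α : ℕ, 1 ≤ n / p ^ α - (n - k) / p ^ α → α ≤ a := by
  intro a
  have hne : rangeLcm (n - k + 1) n ≠ 0 := by
    intro hz
    rw [rangeLcm, Finset.lcm_eq_zero_iff] at hz
    obtain ⟨x, hx, hx0⟩ := hz
    simp only [id] at hx0
    simp at hx
    omega
  constructor
  · have hm : ∃ m ∈ Finset.Icc (n - k + 1) n, p ^ a ∣ m := by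
      by_cases ha : a = 0
      · exact ⟨n, by simp; omega, by simp [ha]⟩
      · apply aux_pow_dvd_lcm p a hp ha
        · intro m hm
          simp at hm
          omega
        · exact (hp.pow_dvd_iff_le_factorization hne).2 le_rfl
    obtain ⟨m, hm, c, rfl⟩ := hm
    rw [Finset.mem_Icc] at hm
    have hq : 0 < p ^ a := pow_pos hp.pos a
    have h1 : (n - k) / p ^ a < c := (Nat.div_lt_iff_lt_mul hq).2 (by rw [mul_comm]; omega)
    have h2 : c ≤ n / p ^ a := (Nat.le_div_iff_mul_le hq).2 (by rw [mul_comm]; omega)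
    omega
  · intro α hα
    have hq : 0 < p ^ α := pow_pos hp.pos α
    have h1 : (n - k) / p ^ α < n / p ^ α := by omega
    have h2 := (Nat.div_lt_iff_lt_mul hq).1 h1
    have h3 := Nat.div_mul_le_self n (p ^ α)
    refine (hp.pow_dvd_iff_le_factorization hne).1
      ((Dvd.intro_left (n / p ^ α) rfl).trans
        (Finset.dvd_lcm (f := id) (b := n / p ^ α * p ^ α) ?_))
    rw [Finset.mem_Icc]
    omega
end

section
/- For every natural number n ≥ 1, lcm(n, n−1, …, n−⌈n/2⌉+1) = lcm(1, 2, …, n), where ⌈·⌉ denotes the ceiling function; i.e., the lcm of the upper half of the integers from 1 to n equals the lcm of all of them. -/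
/-- For `n ≥ 1`, `lcm(n, n-1, …, n-⌈n/2⌉+1) = lcm(1, 2, …, n)`
(here `⌈n/2⌉ = (n+1)/2` in natural division). -/
theorem rangeLcm_upper_half_eq (n : ℕ) (hn : 1 ≤ n) :
    rangeLcm (n - (n + 1) / 2 + 1) n = rangeLcm 1 n := by
  have key : ∀ m k : ℕ, n - k ≤ m → 1 ≤ k → k ≤ n →
      k ∣ (Finset.Icc (n - (n + 1) / 2 + 1) n).lcm id := by
    intro m
    induction m with
    | zero =>
      intro k h1 h2 h3
      exact Finset.dvd_lcm (f := id) (Finset.mem_Icc.2 ⟨by omega, h3⟩)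
    | succ m ih =>
      intro k h1 h2 h3
      by_cases h : n - (n + 1) / 2 + 1 ≤ k
      · exact Finset.dvd_lcm (f := id) (Finset.mem_Icc.2 ⟨h, h3⟩)
      · exact (Dvd.intro_left 2 rfl).trans (ih (2 * k) (by omega) (by omega) (by omega))
  unfold rangeLcm
  apply Nat.dvd_antisymm
  · apply Finset.lcm_dvd
    intro b hb
    rw [Finset.mem_Icc] at hb
    exact Finset.dvd_lcm (f := id) (Finset.mem_Icc.2 ⟨by omega, hb.2⟩)
  · apply Finset.lcm_dvd
    intro b hb
    rw [Finset.mem_Icc] at hb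
    exact key n b (by omega) hb.1 hb.2
end

section
/- For every natural number n ≥ 0, lcm(1, 2, …, n) ≤ 2^n · lcm(1, 2, …, ⌈n/2⌉), where ⌈·⌉ denotes the ceiling function and lcm(1, …, 0) := 1. -/
theorem aux_primepow (n p i : ℕ) (hp : p.Prime) (hi : p ^ i ≤ n) :
    p ^ i ∣ n.choose (n / 2) * rangeLcm 1 ((n + 1) / 2) := by
  set K := (n + 1) / 2 with hK
  have hn : 1 ≤ n := le_trans (Nat.one_le_pow _ _ hp.pos) hi
  have hK1 : K ≠ 0 := by omega
  have ha : p ^ Nat.log p K ∣ rangeLcm 1 K := by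
    unfold rangeLcm
    exact Finset.dvd_lcm (f := id)
      (Finset.mem_Icc.2 ⟨Nat.one_le_pow _ _ hp.pos, Nat.pow_log_le_self p hK1⟩)
  have hc : p ^ (i - Nat.log p K) ∣ n.choose (n / 2) := by
    rw [hp.pow_dvd_iff_le_factorization (Nat.choose_pos (by omega)).ne',
      Nat.factorization_choose hp (Nat.div_le_self n 2) (Nat.lt_succ_self (Nat.log p n))]
    rw [← Nat.card_Ioc]
    apply Finset.card_le_card
    intro j hj
    rw [Finset.mem_Ioc] at hj
    have h1 : K < p ^ j := Nat.lt_pow_of_log_lt hp.one_lt hj.1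
    have h2 : p ^ j ≤ n := le_trans (Nat.pow_le_pow_right hp.pos hj.2) hi
    have h3 : j ≤ Nat.log p n := Nat.le_log_of_pow_le hp.one_lt h2
    simp only [Finset.mem_filter, Finset.mem_Ico]
    refine ⟨by omega, ?_⟩
    rw [Nat.mod_eq_of_lt (by omega), Nat.mod_eq_of_lt (by omega)]
    omega
  refine dvd_trans (pow_dvd_pow p (show i ≤ (i - Nat.log p K) + Nat.log p K by omega)) ?_
  rw [pow_add]
  exact mul_dvd_mul hc ha

/-- For every `n`, `lcm(1, …, n) ≤ 2^n · lcm(1, …, ⌈n/2⌉)`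
(here `⌈n/2⌉ = (n+1)/2` in natural division). -/
theorem rangeLcm_le_two_pow_mul (n : ℕ) :
    rangeLcm 1 n ≤ 2 ^ n * rangeLcm 1 ((n + 1) / 2) := by
  have hpos : 0 < rangeLcm 1 ((n + 1) / 2) := by
    unfold rangeLcm
    rw [Nat.pos_iff_ne_zero, Ne, Finset.lcm_eq_zero_iff]
    simp
  have hd : rangeLcm 1 n ∣ n.choose (n / 2) * rangeLcm 1 ((n + 1) / 2) := by
    conv_lhs => unfold rangeLcm
    apply Finset.lcm_dvd
    intro j hj
    rw [Finset.mem_Icc] at hj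
    rw [id, Nat.dvd_iff_prime_pow_dvd_dvd]
    intro p k hp hk
    exact aux_primepow n p k hp ((Nat.le_of_dvd hj.1 hk).trans hj.2)
  have hc : 0 < n.choose (n / 2) := Nat.choose_pos (by omega)
  exact (Nat.le_of_dvd (Nat.mul_pos hc hpos) hd).trans
    (Nat.mul_le_mul_right _ (Nat.choose_le_two_pow _ _))
end

section
/- For every natural number n ≥ 1, lcm(1, 2, …, n) ≤ n · 4^n. -/
lemma aux_term (n q : ℕ) (hq : 0 < q) (h : q ≤ n) :
    1 + n / 2 / q + n / 3 / q + n / 6 / q ≤ n / q + (if q ≤ n / 6 then 1 else 0) := by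
  have e : ∀ d, n / d / q = n / q / d := fun d => Nat.div_div_eq_div_mul n d q ▸ by
    rw [Nat.div_div_eq_div_mul, mul_comm]
  have h1 : 1 ≤ n / q := (Nat.one_le_div_iff hq).2 h
  have h2 : q ≤ n / 6 ↔ 1 ≤ n / q / 6 := by
    rw [← e, Nat.one_le_div_iff hq]
  rw [e, e, e]
  simp only [h2]
  generalize n / q = t at *
  split_ifs <;> omega

lemma aux_dvd_s13 (n : ℕ) :
    Nat.lcmUpto n * (n / 2).factorial * (n / 3).factorial * (n / 6).factorial
      ∣ n.factorial * Nat.lcmUpto (n / 6) := by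
  have hL := Nat.lcmUpto_ne_zero
  have hf := Nat.factorial_ne_zero
  rw [← Nat.factorization_prime_le_iff_dvd (by simp [hL, hf]) (by simp [hL, hf])]
  intro p hp
  rw [Nat.factorization_mul (by simp [hL, hf]) (hf _),
    Nat.factorization_mul (by simp [hL, hf]) (hf _),
    Nat.factorization_mul (hL _) (hf _), Nat.factorization_mul (hf _) (hL _)]
  simp only [Finsupp.add_apply, Nat.factorization_lcmUpto _ hp]
  have hl : ∀ d, Nat.log p (n / d) < Nat.log p n + 1 := fun d =>
    Nat.lt_succ_of_le (Nat.log_mono_right (Nat.div_le_self _ _))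
  rw [Nat.factorization_factorial hp (hl 2), Nat.factorization_factorial hp (hl 3),
    Nat.factorization_factorial hp (hl 6), Nat.factorization_factorial hp (Nat.lt_succ_self _)]
  have h1 : Nat.log p n = ∑ i ∈ Finset.Ico 1 (Nat.log p n + 1), 1 := by simp
  have h2 : ∑ i ∈ Finset.Ico 1 (Nat.log p n + 1), (if p ^ i ≤ n / 6 then 1 else 0)
      ≤ Nat.log p (n / 6) := by
    rw [← Finset.sum_filter, ← Finset.card_eq_sum_ones]
    calc _ ≤ (Finset.Ico 1 (Nat.log p (n / 6) + 1)).card := by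
          apply Finset.card_le_card
          intro i hi
          simp only [Finset.mem_filter, Finset.mem_Ico] at hi ⊢
          exact ⟨hi.1.1, Nat.lt_succ_of_le (Nat.le_log_of_pow_le hp.one_lt hi.2)⟩
      _ = _ := by simp
  refine le_trans ?_ (Nat.add_le_add_left h2 _)
  nth_rewrite 1 [h1]
  rw [← Finset.sum_add_distrib, ← Finset.sum_add_distrib, ← Finset.sum_add_distrib,
    ← Finset.sum_add_distrib]
  apply Finset.sum_le_sum
  intro i hi
  rw [Finset.mem_Ico] at hi
  apply aux_term _ _ (pow_pos hp.pos _)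
  have hn0 : n ≠ 0 := by
    rintro rfl
    simp at hi
    omega
  exact (Nat.pow_le_pow_right hp.pos (by omega)).trans (Nat.pow_log_le_self p hn0)

lemma aux_multi (a b c : ℕ) :
    (a + b + c).factorial ≤ 2 ^ (a + c) * 3 ^ (b + c) *
      (a.factorial * b.factorial * c.factorial) := by
  have h1 : (a + (b + c)).choose a ≤ 2 ^ (a + (b + c)) := Nat.choose_le_two_pow _ _
  have h2 : 2 ^ b * (b + c).choose b ≤ 3 ^ (b + c) := by
    have := add_pow 2 1 (b + c)
    norm_num at this
    rw [this]
    exact Finset.single_le_sum (f := fun i => 2 ^ i * (b + c).choose i) (fun _ _ => Nat.zero_le _)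
      (Finset.mem_range.2 (by omega : b < b + c + 1))
  have e1 := Nat.add_choose_mul_factorial_mul_factorial a (b + c)
  have e2 := Nat.add_choose_mul_factorial_mul_factorial b c
  have h3 : (a + (b + c)).choose a * (b + c).choose b ≤ 2 ^ (a + c) * 3 ^ (b + c) := by
    apply Nat.le_of_mul_le_mul_left _ (pow_pos (by norm_num : 0 < 2) b)
    calc _ = (a + (b + c)).choose a * (2 ^ b * (b + c).choose b) := by ring
      _ ≤ 2 ^ (a + (b + c)) * 3 ^ (b + c) := Nat.mul_le_mul h1 h2
      _ = _ := by ring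
  rw [Nat.choose_symm_add.symm] at e1 e2
  rw [add_assoc, ← e1, ← e2]
  calc _ = ((a + (b + c)).choose a * (b + c).choose b) *
      (a.factorial * b.factorial * c.factorial) := by ring
    _ ≤ _ := Nat.mul_le_mul_right _ h3

lemma aux_step (n r : ℕ) (h : n = n / 2 + n / 3 + n / 6 + r) :
    Nat.lcmUpto n ≤ n ^ r * (2 ^ (n / 2 + n / 6) * 3 ^ (n / 3 + n / 6)) *
      Nat.lcmUpto (n / 6) := by
  have h1 := Nat.le_of_dvd (Nat.mul_pos (Nat.factorial_pos _) (Nat.lcmUpto_pos _)) (aux_dvd_s13 n)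
  have h2 := aux_multi (n / 2) (n / 3) (n / 6)
  have h3 : n.factorial ≤ n ^ r * (n / 2 + n / 3 + n / 6).factorial := by
    have h4 := Nat.factorial_mul_descFactorial (n := n) (k := r) (by omega)
    have h5 : n - r = n / 2 + n / 3 + n / 6 := by omega
    rw [h5] at h4
    rw [← h4, mul_comm]
    exact Nat.mul_le_mul_right _ (Nat.descFactorial_le_pow _ _)
  have hp : 0 < (n / 2).factorial * (n / 3).factorial * (n / 6).factorial := by positivity
  apply Nat.le_of_mul_le_mul_right _ hp
  calc _ = Nat.lcmUpto n * (n / 2).factorial * (n / 3).factorial * (n / 6).factorial := by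
        ring
    _ ≤ _ := h1
    _ ≤ (n ^ r * (2 ^ (n / 2 + n / 6) * 3 ^ (n / 3 + n / 6) *
      ((n / 2).factorial * (n / 3).factorial * (n / 6).factorial))) *
        Nat.lcmUpto (n / 6) :=
        Nat.mul_le_mul_right _ (h3.trans (Nat.mul_le_mul_left _ h2))
    _ = _ := by ring

lemma aux_sq (k : ℕ) : k * (6 * k + 5) * 12 ≤ 1024 * 2 ^ k := by
  induction k with
  | zero => norm_num
  | succ k ih =>
    rcases Nat.lt_or_ge k 3 with h | h
    · interval_cases k <;> norm_num
    · rw [pow_succ]; nlinarith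

lemma aux_main_s13 (n : ℕ) : 1 ≤ n → Nat.lcmUpto n ≤ n * 4 ^ n := by
  induction n using Nat.strong_induction_on with
  | _ n ih =>
    intro hn
    rcases Nat.lt_or_ge n 6 with h | h
    · interval_cases n <;> decide
    have hk := ih (n / 6) (by omega) (by omega)
    obtain ⟨k, j, hj, rfl⟩ : ∃ k j, j < 6 ∧ n = 6 * k + j :=
      ⟨n / 6, n % 6, Nat.mod_lt _ (by norm_num), by omega⟩
    have d6 : (6 * k + j) / 6 = k := by omega
    have hk2 : k ≤ 2 ^ k := Nat.lt_two_pow_self.le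
    have hsq := aux_sq k
    have hP : 1728 ^ k * 2 ^ k ≤ 4096 ^ k := by
      rw [← mul_pow]; exact Nat.pow_le_pow_left (by norm_num) _
    have key : ∀ r A B, (6 * k + j) = (6 * k + j) / 2 + (6 * k + j) / 3 + (6 * k + j) / 6 + r →
        (6 * k + j) / 2 = 3 * k + A → (6 * k + j) / 3 = 2 * k + B →
        (6 * k + j) ^ r * (2 ^ A * 3 ^ B) * k ≤ (6 * k + j) * 4 ^ j * 2 ^ k →
        Nat.lcmUpto (6 * k + j) ≤ (6 * k + j) * 4 ^ (6 * k + j) := by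
      intro r A B h0 hA hB hle
      have hs := aux_step _ r h0
      rw [d6] at hk
      rw [hA, hB, d6] at hs
      calc _ ≤ _ := hs
        _ ≤ (6 * k + j) ^ r * (2 ^ (3 * k + A + k) * 3 ^ (2 * k + B + k)) * (k * 4 ^ k) :=
          Nat.mul_le_mul_left _ hk
        _ = ((6 * k + j) ^ r * (2 ^ A * 3 ^ B) * k) * 1728 ^ k := by
          rw [show 1728 = 2 ^ 4 * 3 ^ 3 * 4 by norm_num, mul_pow, mul_pow, ← pow_mul, ← pow_mul]
          ring
        _ ≤ ((6 * k + j) * 4 ^ j * 2 ^ k) * 1728 ^ k := Nat.mul_le_mul_right _ hle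
        _ = ((6 * k + j) * 4 ^ j) * (1728 ^ k * 2 ^ k) := by ring
        _ ≤ ((6 * k + j) * 4 ^ j) * 4096 ^ k := Nat.mul_le_mul_left _ hP
        _ = _ := by
          rw [show 4096 = 4 ^ 6 by norm_num, ← pow_mul]; ring
    interval_cases j
    · refine key 0 0 0 (by omega) (by omega) (by omega) ?_
      norm_num; nlinarith
    · refine key 1 0 0 (by omega) (by omega) (by omega) ?_
      rw [pow_one, mul_assoc, mul_assoc (6 * k + _)]; apply Nat.mul_le_mul_left; norm_num; omega
    · refine key 1 1 0 (by omega) (by omega) (by omega) ?_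
      rw [pow_one, mul_assoc, mul_assoc (6 * k + _)]; apply Nat.mul_le_mul_left; norm_num; omega
    · refine key 1 1 1 (by omega) (by omega) (by omega) ?_
      rw [pow_one, mul_assoc, mul_assoc (6 * k + _)]; apply Nat.mul_le_mul_left; norm_num; omega
    · refine key 1 2 1 (by omega) (by omega) (by omega) ?_
      rw [pow_one, mul_assoc, mul_assoc (6 * k + _)]; apply Nat.mul_le_mul_left; norm_num; omega
    · refine key 2 2 1 (by omega) (by omega) (by omega) ?_
      rw [pow_two, mul_assoc, mul_assoc, mul_assoc (6 * k + 5) (4 ^ 5)]; apply Nat.mul_le_mul_left; norm_num; linarith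

/-- For every `n ≥ 1`, `lcm(1, 2, …, n) ≤ n · 4^n`. -/
theorem rangeLcm_le_mul_four_pow (n : ℕ) (hn : 1 ≤ n) :
    rangeLcm 1 n ≤ n * 4 ^ n := by
  exact aux_main_s13 n hn
end

section
/- For all natural numbers n ≥ 1 and k ≥ 0, the number Ω(lcm(1, 2, …, n+k) / lcm(1, 2, …, n)) of prime factors, counted with multiplicity, of the integer lcm(1, 2, …, n+k) / lcm(1, 2, …, n) is at most k. -/
theorem rangeLcm_ne_zero_aux (n : ℕ) : rangeLcm 1 n ≠ 0 := by
  unfold rangeLcm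
  rw [Ne, Finset.lcm_eq_zero_iff]
  simp

theorem dvd_rangeLcm_aux {a n : ℕ} (h1 : 1 ≤ a) (h2 : a ≤ n) : a ∣ rangeLcm 1 n :=
  Finset.dvd_lcm (f := id) (Finset.mem_Icc.2 ⟨h1, h2⟩)

theorem succ_dvd_aux (m : ℕ) (hm : 1 ≤ m) :
    m + 1 ∣ rangeLcm 1 m * (m + 1).minFac := by
  have hp : (m + 1).minFac.Prime := Nat.minFac_prime (by omega)
  obtain ⟨j, u, hu, he⟩ := Nat.exists_eq_pow_mul_and_not_dvd (n := m + 1) (by omega)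
    (m + 1).minFac hp.ne_one
  have hd : (m + 1).minFac ∣ m + 1 := Nat.minFac_dvd _
  generalize (m + 1).minFac = p at *
  have hj : j ≠ 0 := by
    rintro rfl
    rw [pow_zero, one_mul] at he
    exact hu (he ▸ hd)
  have hpos : 0 < p ^ j := pow_pos hp.pos j
  have h1 : 1 < p ^ j := Nat.one_lt_pow hj hp.one_lt
  have hu0 : 0 < u := by
    rcases Nat.eq_zero_or_pos u with h | h
    · subst h; simp at hu
    · exact h
  by_cases hu1 : u = 1
  · subst hu1
    rw [mul_one] at he
    obtain ⟨i, rfl⟩ := Nat.exists_eq_succ_of_ne_zero hj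
    have hlt : p ^ i < p ^ (i + 1) := Nat.pow_lt_pow_right hp.one_lt (by omega)
    have : p ^ i ∣ rangeLcm 1 m :=
      dvd_rangeLcm_aux (pow_pos hp.pos i) (by rw [Nat.succ_eq_add_one] at he; omega)
    rw [he, Nat.succ_eq_add_one, pow_succ]
    exact Nat.mul_dvd_mul_right this p
  · apply Dvd.dvd.mul_right
    rw [he]
    apply Nat.Coprime.mul_dvd_of_dvd_of_dvd
    · exact Nat.Coprime.pow_left _ ((Nat.Prime.coprime_iff_not_dvd hp).2 hu)
    · exact dvd_rangeLcm_aux hpos (by nlinarith [show 2 ≤ u by omega])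
    · exact dvd_rangeLcm_aux hu0 (by nlinarith)

theorem exists_bound_aux (n k : ℕ) (hn : 1 ≤ n) :
    ∃ d : ℕ, d ≠ 0 ∧ d.primeFactorsList.length ≤ k ∧
      rangeLcm 1 (n + k) ∣ rangeLcm 1 n * d := by
  induction k with
  | zero => exact ⟨1, by simp, by simp, by simp⟩
  | succ k ih =>
    obtain ⟨d, hd, hl, hdv⟩ := ih
    have hp : (n + k + 1).minFac.Prime := Nat.minFac_prime (by omega)
    refine ⟨d * (n + k + 1).minFac, mul_ne_zero hd hp.ne_zero, ?_, ?_⟩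
    · rw [(Nat.perm_primeFactorsList_mul hd hp.ne_zero).length_eq, List.length_append,
        Nat.primeFactorsList_prime hp]
      simpa using hl
    · rw [← mul_assoc]
      refine dvd_trans ?_ (Nat.mul_dvd_mul_right hdv _)
      apply Finset.lcm_dvd
      intro b hb
      rw [Finset.mem_Icc] at hb
      rcases Nat.lt_or_ge (n + k) b with h | h
      · have : b = n + k + 1 := by omega
        subst this
        exact succ_dvd_aux _ (by omega)
      · exact Dvd.dvd.mul_right (dvd_rangeLcm_aux hb.1 h) _

/-- For `n ≥ 1` and `k ≥ 0`, the integer `lcm(1, …, n+k) / lcm(1, …, n)`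
has at most `k` prime factors counted with multiplicity. -/
theorem cardFactors_rangeLcm_div_le (n k : ℕ) (hn : 1 ≤ n) :
    (rangeLcm 1 (n + k) / rangeLcm 1 n).primeFactorsList.length ≤ k := by
  obtain ⟨d, hd, hl, hdv⟩ := exists_bound_aux n k hn
  have h1 : rangeLcm 1 n ∣ rangeLcm 1 (n + k) := by
    apply Finset.lcm_dvd
    intro b hb
    rw [Finset.mem_Icc] at hb
    exact dvd_rangeLcm_aux hb.1 (hb.2.trans (Nat.le_add_right n k))
  have hq : rangeLcm 1 (n + k) / rangeLcm 1 n ∣ d :=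
    (Nat.div_dvd_iff_dvd_mul h1 (Nat.pos_of_ne_zero (rangeLcm_ne_zero_aux n))).2 hdv
  exact (Nat.primeFactorsList_sublist_of_dvd hq hd).length_le.trans hl
end

section
/- For all natural numbers n ≥ 1 and k ≥ 0, the lcm-binomial number [n+k, n] = lcm(k+1, k+2, …, k+n) / lcm(1, 2, …, n) has at most k prime factors counted with multiplicity: Ω([n+k, n]) ≤ k. (Equivalently, every entry of the (k+1)-th diagonal of the lcm-binomial triangle has at most k prime factors with multiplicity.) -/
theorem rangeLcm_pos (a b : ℕ) (ha : 1 ≤ a) : rangeLcm a b ≠ 0 := by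
  unfold rangeLcm
  intro h
  rw [Finset.lcm_eq_zero_iff] at h
  simp at h
  omega

theorem dvd_rangeLcm {a b x : ℕ} (h1 : a ≤ x) (h2 : x ≤ b) : x ∣ rangeLcm a b :=
  Finset.dvd_lcm (f := id) (Finset.mem_Icc.2 ⟨h1, h2⟩)

theorem rangeLcm_dvd {a b y : ℕ} (h : ∀ x, a ≤ x → x ≤ b → x ∣ y) : rangeLcm a b ∣ y :=
  Finset.lcm_dvd fun x hx => h x (Finset.mem_Icc.1 hx).1 (Finset.mem_Icc.1 hx).2

theorem omega_mono {a b : ℕ} (hb : b ≠ 0) (h : a ∣ b) :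
    a.primeFactorsList.length ≤ b.primeFactorsList.length :=
  ((Nat.primeFactorsList_sublist_of_dvd h hb)).length_le

theorem omega_mul {a b : ℕ} (ha : a ≠ 0) (hb : b ≠ 0) :
    (a * b).primeFactorsList.length = a.primeFactorsList.length + b.primeFactorsList.length := by
  rw [(Nat.perm_primeFactorsList_mul ha hb).length_eq, List.length_append]

theorem omega_step (m : ℕ) (hm : 1 ≤ m) :
    (rangeLcm 1 (m + 1)).primeFactorsList.length ≤ (rangeLcm 1 m).primeFactorsList.length + 1 := by
  have hp : (m + 1).minFac.Prime := Nat.minFac_prime (by omega)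
  have hL := rangeLcm_pos 1 m le_rfl
  obtain ⟨c, hc⟩ := Nat.minFac_dvd (m + 1)
  have h : rangeLcm 1 (m + 1) ∣ (m + 1).minFac * rangeLcm 1 m := by
    refine rangeLcm_dvd fun x h1 h2 => ?_
    rcases Nat.lt_or_ge m x with h3 | h3
    · obtain rfl : x = m + 1 := by omega
      have h2 := hp.two_le
      have : c ∣ rangeLcm 1 m := by
        refine dvd_rangeLcm ?_ ?_
        · rcases Nat.eq_zero_or_pos c with h | h
          · subst h; omega
          · exact h
        · nlinarith
      conv_lhs => rw [hc]
      exact mul_dvd_mul_left _ this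
    · exact (dvd_rangeLcm h1 h3).mul_left _
  have := omega_mono (mul_ne_zero hp.ne_zero hL) h
  rw [omega_mul hp.ne_zero hL, Nat.primeFactorsList_prime hp] at this
  simp at this
  omega

theorem omega_steps (n k : ℕ) (hn : 1 ≤ n) :
    (rangeLcm 1 (n + k)).primeFactorsList.length ≤ (rangeLcm 1 n).primeFactorsList.length + k := by
  induction k with
  | zero => simp
  | succ k ih =>
    have := omega_step (n + k) (by omega)
    rw [← add_assoc]
    omega

/-- For `n ≥ 1` and `k ≥ 0`, the lcm-binomial number `[n+k, n]` has at most
`k` prime factors counted with multiplicity: `Ω([n+k, n]) ≤ k`. -/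
theorem cardFactors_lcmBinom_diag_le (n k : ℕ) (hn : 1 ≤ n) :
    (lcmBinom (n + k) n).primeFactorsList.length ≤ k := by
  have hd : rangeLcm 1 n ∣ rangeLcm (k + 1) (n + k) := by
    refine rangeLcm_dvd fun x h1 h2 => ?_
    have e := Nat.div_add_mod k x
    have l := Nat.mod_lt k h1
    refine (Dvd.intro (k / x + 1) rfl).trans (dvd_rangeLcm (x := x * (k / x + 1)) ?_ ?_) <;>
    · rw [mul_add]; omega
  have hd2 : rangeLcm (k + 1) (n + k) ∣ rangeLcm 1 (n + k) :=
    rangeLcm_dvd fun x h1 h2 => dvd_rangeLcm (by omega) h2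
  have h0 := rangeLcm_pos 1 n le_rfl
  have h1 := rangeLcm_pos (k + 1) (n + k) (by omega)
  have h2 := rangeLcm_pos 1 (n + k) le_rfl
  have e : lcmBinom (n + k) n = rangeLcm (k + 1) (n + k) / rangeLcm 1 n := by
    unfold lcmBinom
    rw [Nat.add_sub_cancel_left]
  rw [e]
  obtain ⟨c, hc⟩ := hd
  have hc0 : c ≠ 0 := by rintro rfl; simp at hc; exact h1 hc
  rw [hc, Nat.mul_div_cancel_left _ (Nat.pos_of_ne_zero h0)]
  have a := omega_mono h2 hd2
  rw [hc, omega_mul h0 hc0] at a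
  have b := omega_steps n k hn
  omega
end

section
/- For all natural numbers n ≥ 1 and k ≥ 0, the lcm-binomial number [n+k, n] = lcm(k+1, k+2, …, k+n) / lcm(1, 2, …, n) divides the positive integer lcm(1, 2, …, n+k) / lcm(1, 2, …, n). -/
/-- For `n ≥ 1` and `k ≥ 0`, `[n+k, n]` divides `lcm(1, …, n+k) / lcm(1, …, n)`. -/
theorem lcmBinom_diag_dvd (n k : ℕ) (hn : 1 ≤ n) :
    lcmBinom (n + k) n ∣ rangeLcm 1 (n + k) / rangeLcm 1 n := by
  unfold lcmBinom
  have e : n + k - n + 1 = k + 1 := by omega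
  rw [e]
  apply Nat.div_dvd_div
  · unfold rangeLcm
    apply Finset.lcm_dvd
    intro i hi
    rw [Finset.mem_Icc] at hi
    have hd : i * ((k + i) / i) ∈ Finset.Icc (k + 1) (n + k) := by
      rw [Finset.mem_Icc]
      have h1 := Nat.div_add_mod (k + i) i
      have h2 := Nat.mod_lt (k + i) (show i > 0 by omega)
      omega
    exact (Dvd.intro _ rfl).trans (Finset.dvd_lcm (f := id) hd)
  · unfold rangeLcm
    apply Finset.lcm_mono
    apply Finset.Icc_subset_Icc (by omega) le_rfl
end
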